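/- arXiv:2201.00782 — 2 statements merged into one kernel-verified Lean document; each statement's English description precedes it below -/
import Mathlib

section
/- Let w_n = |W_{2/3,n}|, the number of binary words of length n such that every maximal factor 0^a 1^b with a > 0 satisfies 2a > 3b. Then w_n = w_{n-1} + w_{n-3} + w_{n-5} for all n ≥ 5, with initial values w_0,...,w_4 = 1, 2, 3, 5, 8. -/
/-- `isValid c d w` says every maximal factor of `w` of the form `0^a 1^b`
with `a > 0` satisfies `a * (c/d) > b`, i.e. `c*a > d*b`.
Here `false` plays the role of `0` and `true` of `1`; maximality is expressed
by requiring the prefix to end with `1` (or be empty) and the suffix to start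
with `0` (or be empty). -/
def isValid (c d : ℕ) (w : List Bool) : Prop :=
  ∀ p s : List Bool, ∀ a b : ℕ,
    w = p ++ List.replicate a false ++ List.replicate b true ++ s →
    (p = [] ∨ p.getLast? = some true) →
    (s = [] ∨ s.head? = some false) →
    0 < a → d * b < c * a

/-- number of words of length `n` in `W_{c/d,n}` -/
noncomputable def wcount (c d n : ℕ) : ℕ :=
  Nat.card {w : List Bool // w.length = n ∧ isValid c d w}

/-- `p` is empty or ends with `1`. -/
def EndsOne (p : List Bool) : Prop := p = [] ∨ p.getLast? = some true

theorem run_unique (x : Bool) (a : ℕ) : ∀ (a' : ℕ) (p p' : List Bool),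
    p.getLast? ≠ some x → p'.getLast? ≠ some x →
    p ++ List.replicate a x = p' ++ List.replicate a' x → p = p' ∧ a = a' := by
  induction a with
  | zero =>
    intro a' p p' h h' e
    cases a' with
    | zero => simpa using e
    | succ a' =>
      exfalso
      apply h
      simp only [List.replicate_zero, List.append_nil] at e
      rw [e, List.replicate_succ', ← List.append_assoc]
      simp
  | succ a ih =>
    intro a' p p' h h' e
    cases a' with
    | zero =>
      exfalso
      apply h'
      simp only [List.replicate_zero, List.append_nil] at e
      rw [← e, List.replicate_succ', ← List.append_assoc]
      simp
    | succ a' =>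
      rw [List.replicate_succ', List.replicate_succ', ← List.append_assoc,
        ← List.append_assoc] at e
      have e2 := List.append_cancel_right e
      obtain ⟨h1, h2⟩ := ih a' p p' h h' e2
      exact ⟨h1, by omega⟩

theorem EndsOne.ne {p : List Bool} (h : EndsOne p) : p.getLast? ≠ some false := by
  rcases h with h | h <;> simp [h]

theorem decomp (u : List Bool) : ∃ p m, EndsOne p ∧ u = p ++ List.replicate m false := by
  induction u using List.reverseRecOn with
  | nil => exact ⟨[], 0, Or.inl rfl, rfl⟩
  | append_singleton l x ih =>
    cases x with
    | true => exact ⟨l ++ [true], 0, Or.inr (by simp), by simp⟩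
    | false =>
      obtain ⟨p, m, hp, e⟩ := ih
      exact ⟨p, m + 1, hp, by rw [e, List.replicate_succ', List.append_assoc]⟩

theorem last_zero (p : List Bool) {a : ℕ} (ha : 0 < a) :
    (p ++ List.replicate a false).getLast? ≠ some true := by
  obtain ⟨a, rfl⟩ : ∃ c, a = c + 1 := ⟨a - 1, by omega⟩
  rw [List.replicate_succ', ← List.append_assoc]
  simp

theorem core (p : List Bool) (a b : ℕ) (hp : EndsOne p) (ha : 0 < a) :
    isValid 2 3 (p ++ List.replicate a false ++ List.replicate b true) ↔
      isValid 2 3 p ∧ 3 * b < 2 * a := by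
  constructor
  · intro h
    refine ⟨?_, h p [] a b (by simp) hp (Or.inl rfl) ha⟩
    intro p' s' a' b' e hp' hs' ha'
    refine h p' (s' ++ List.replicate a false ++ List.replicate b true) a' b' ?_ hp' ?_ ha'
    · rw [e]; simp
    · right
      obtain ⟨a, rfl⟩ : ∃ c, a = c + 1 := ⟨a - 1, by omega⟩
      rcases hs' with h | h
      · simp [h, List.replicate_succ]
      · simp [h]
  · rintro ⟨h, hab⟩ p' s' a' b' e hp' hs' ha'
    rcases Nat.eq_zero_or_pos b' with rfl | hb'
    · omega
    by_cases hs : s' = []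
    · subst hs
      rw [List.append_nil] at e
      obtain ⟨e1, e2⟩ := run_unique true b b' _ _ (last_zero p ha) (last_zero p' ha') e
      obtain ⟨e3, e4⟩ := run_unique false a a' _ _ hp.ne (EndsOne.ne hp') e1
      omega
    · have hs2 : s'.head? = some false := by tauto
      rw [List.append_assoc p] at e
      rcases List.append_eq_append_iff.mp e with ⟨t, e1, e2⟩ | ⟨t, e1, e2⟩
      · by_cases ht : t = []
        · subst ht
          refine h p' [] a' b' (by rw [e1]; simp) hp' (Or.inl rfl) ha'
        · exfalso
          have hsort : (List.replicate a false ++ List.replicate b true).Pairwise (· ≤ ·) := by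
            simp [List.pairwise_append, List.pairwise_replicate]
          rw [e2, List.pairwise_append] at hsort
          have hl : true ∈ t := by
            obtain ⟨c, rfl⟩ : ∃ c, b' = c + 1 := ⟨b' - 1, by omega⟩
            have := congrArg List.getLast? e1
            rw [List.replicate_succ', ← List.append_assoc, List.getLast?_append_of_ne_nil _ ht,
              List.getLast?_concat] at this
            exact List.mem_of_getLast? this.symm
          have := hsort.2.2 true hl false (List.mem_of_head? hs2)
          revert this; decide
      · refine h p' t a' b' e1 hp' ?_ ha'
        by_cases ht : t = []
        · exact Or.inl ht
        · right
          rw [e2, List.head?_append_of_ne_nil _ ht] at hs2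
          exact hs2

theorem zeros (p : List Bool) (m : ℕ) (hp : EndsOne p) :
    isValid 2 3 (p ++ List.replicate m false) ↔ isValid 2 3 p := by
  rcases Nat.eq_zero_or_pos m with rfl | hm
  · simp
  · have := core p m 0 hp hm
    simp only [List.replicate_zero, List.append_nil] at this
    rw [this]
    simp [hm]

theorem step (u : List Bool) (k : ℕ) :
    isValid 2 3 (u ++ [false] ++ List.replicate k true) ↔
      ∃ v, isValid 2 3 v ∧ v ++ List.replicate (3 * k / 2 + 1) false = u ++ [false] := by
  obtain ⟨p, m, hp, rfl⟩ := decomp u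
  have e : p ++ List.replicate m false ++ [false] = p ++ List.replicate (m + 1) false := by
    rw [List.replicate_succ', List.append_assoc]
  rw [e, core p (m + 1) k hp (by omega)]
  constructor
  · rintro ⟨h1, h2⟩
    refine ⟨p ++ List.replicate (m + 1 - (3 * k / 2 + 1)) false, (zeros _ _ hp).2 h1, ?_⟩
    rw [List.append_assoc, ← List.replicate_add]
    congr 2
    omega
  · rintro ⟨v, hv, e⟩
    obtain ⟨q, l, hq, rfl⟩ := decomp v
    rw [List.append_assoc, ← List.replicate_add] at e
    obtain ⟨rfl, e2⟩ := run_unique false _ _ _ _ hq.ne hp.ne e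
    exact ⟨(zeros _ _ hq).1 hv, by omega⟩

/-- Words `u` of length `n` such that `u 1^k` is valid. -/
def A (k n : ℕ) : Set (List Bool) :=
  {u | u.length = n ∧ isValid 2 3 (u ++ List.replicate k true)}

theorem A_finite (k n : ℕ) : (A k n).Finite :=
  (List.finite_length_eq Bool n).subset fun _ h => h.1

theorem A_succ (k n : ℕ) : A k (n + 1) = (fun u => u ++ [true]) '' A (k + 1) n ∪
    (if 3 * k / 2 + 1 ≤ n + 1 then
      (fun u => u ++ List.replicate (3 * k / 2 + 1) false) '' A 0 (n + 1 - (3 * k / 2 + 1))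
      else ∅) := by
  have key : ∀ w, w ∈ (if 3 * k / 2 + 1 ≤ n + 1 then
      (fun u => u ++ List.replicate (3 * k / 2 + 1) false) '' A 0 (n + 1 - (3 * k / 2 + 1))
      else ∅) ↔ w.length = n + 1 ∧ ∃ v, isValid 2 3 v ∧
        v ++ List.replicate (3 * k / 2 + 1) false = w := by
    intro w
    constructor
    · split_ifs with hk
      · rintro ⟨v, ⟨h1, h2⟩, rfl⟩
        refine ⟨?_, v, by simpa using h2, rfl⟩
        simp only [List.length_append, List.length_replicate, h1]
        omega
      · simp
    · rintro ⟨h1, v, hv, rfl⟩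
      simp only [List.length_append, List.length_replicate] at h1
      rw [if_pos (by omega)]
      exact ⟨v, ⟨by omega, by simpa using hv⟩, rfl⟩
  ext w
  rw [Set.mem_union, key]
  rcases List.eq_nil_or_concat w with rfl | ⟨u, x, rfl⟩ <;> try rw [List.concat_eq_append]
  · simp [A]
  · cases x with
    | true =>
      have : ¬ ∃ v, isValid 2 3 v ∧
          v ++ List.replicate (3 * k / 2 + 1) false = u ++ [true] := by
        rintro ⟨v, -, e⟩
        have := last_zero v (a := 3 * k / 2 + 1) (by omega)
        rw [e] at this
        simp at this
      rw [eq_false this]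
      simp [A, List.replicate_succ]
    | false =>
      rw [← step]
      simp [A]

theorem A_card (k n : ℕ) : (A k (n + 1)).ncard = (A (k + 1) n).ncard +
    if 3 * k / 2 + 1 ≤ n + 1 then (A 0 (n + 1 - (3 * k / 2 + 1))).ncard else 0 := by
  rw [A_succ, Set.ncard_union_eq ?_ ?_ ?_]
  · congr 1
    · exact Set.ncard_image_of_injective _ (List.append_left_injective _)
    · split_ifs
      · exact Set.ncard_image_of_injective _ (List.append_left_injective _)
      · simp
  · rw [Set.disjoint_left]
    rintro w ⟨u, -, rfl⟩ h
    split_ifs at h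
    · obtain ⟨v, -, e⟩ := h
      have := last_zero v (a := 3 * k / 2 + 1) (by omega)
      simp only at e
      rw [e] at this
      simp at this
    · exact h
  · exact (A_finite _ _).image _
  · split_ifs
    · exact (A_finite _ _).image _
    · exact Set.finite_empty

theorem A_zero (k : ℕ) : (A k 0).ncard = 1 := by
  rw [Set.ncard_eq_one]
  refine ⟨[], ?_⟩
  ext w
  simp only [A, Set.mem_ofPred_eq, Set.mem_singleton_iff, List.length_eq_zero_iff]
  refine ⟨fun h => h.1, ?_⟩
  rintro rfl
  refine ⟨rfl, ?_⟩
  intro p s a b e _ _ ha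
  exfalso
  have : false ∈ [] ++ List.replicate k true := by
    rw [e]; simp; omega
  simp at this

theorem A_shift (n : ℕ) : ∀ k, 1 ≤ k → (A (k + 2) (n + 3)).ncard = (A k n).ncard := by
  induction n with
  | zero =>
    intro k hk
    rw [A_card, A_card, A_card, A_zero, A_zero, if_neg (by omega), if_neg (by omega),
      if_neg (by omega)]
  | succ n ih =>
    intro k hk
    rw [A_card, A_card k n, ← ih (k + 1) (by omega)]
    congr 1
    by_cases h : 3 * k / 2 + 1 ≤ n + 1
    · rw [if_pos h, if_pos (by omega)]
      congr 2
      omega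
    · rw [if_neg h, if_neg (by omega)]

theorem wcount_eq (n : ℕ) : wcount 2 3 n = (A 0 n).ncard := by
  have : A 0 n = {w | w.length = n ∧ isValid 2 3 w} := by simp [A]
  rw [this]
  rfl

theorem stmt4 :
    (∀ n : ℕ, 5 ≤ n →
      wcount 2 3 n = wcount 2 3 (n - 1) + wcount 2 3 (n - 3) + wcount 2 3 (n - 5)) ∧
    wcount 2 3 0 = 1 ∧ wcount 2 3 1 = 2 ∧ wcount 2 3 2 = 3 ∧ wcount 2 3 3 = 5 ∧
    wcount 2 3 4 = 8 := by
  simp only [wcount_eq]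
  refine ⟨?_, ?_, ?_, ?_, ?_, ?_⟩
  · intro n hn
    obtain ⟨m, rfl⟩ : ∃ m, n = m + 5 := ⟨n - 5, by omega⟩
    rcases m with _ | m
    · simp [A_card, A_zero]
    · have h1 := A_card 0 (m + 5)
      have h2 := A_card 1 (m + 4)
      have h3 := A_card 2 (m + 3)
      have h4 := A_shift m 1 le_rfl
      have h5 := A_card 0 m
      rw [if_pos (by omega)] at h1 h2 h3 h5
      simp only [show m + 5 + 1 - (3 * 0 / 2 + 1) = m + 5 by omega] at h1
      simp only [show m + 4 + 1 - (3 * 1 / 2 + 1) = m + 3 by omega] at h2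
      simp only [show m + 3 + 1 - (3 * 2 / 2 + 1) = m by omega] at h3
      simp only [show m + 1 - (3 * 0 / 2 + 1) = m by omega] at h5
      simp only [show m + 1 + 5 - 1 = m + 5 by omega, show m + 1 + 5 - 3 = m + 3 by omega,
        show m + 1 + 5 - 5 = m + 1 by omega, show m + 1 + 5 = m + 5 + 1 by omega]
      simp only [Nat.reduceAdd, Nat.add_assoc] at *
      omega
  all_goals simp [A_card, A_zero]
end

section
/- Let q = c/d be a positive rational in lowest terms and let w_n = |W_{q,n}|. Then for all n ≥ c + d, w_n = Σ_{j ∈ J} w_{n−j} + w_{n−(c+d)}, where J = {1 + ⌊i/q⌋ + i : 0 ≤ i ≤ c−1} is the multiset of total degrees of the model polynomial P_q. -/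
/-- The token `0^(1+⌊i d / c⌋) 1^i`. -/
def tok (c d i : ℕ) : List Bool :=
  List.replicate (i * d / c) false ++ false :: List.replicate i true

lemma tok_length (c d i : ℕ) : (tok c d i).length = 1 + i * d / c + i := by
  simp [tok]; omega

lemma tok_eq (c d i : ℕ) :
    tok c d i = List.replicate (i * d / c + 1) false ++ List.replicate i true := by
  simp [tok, List.replicate_succ']

lemma tok_cons (c d i : ℕ) : ∃ t, tok c d i = false :: t := by
  rw [tok_eq, List.replicate_succ]; exact ⟨_, rfl⟩

lemma cancel_ones (b i : ℕ) : ∀ X Y : List Bool,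
    X ++ false :: List.replicate b true = Y ++ false :: List.replicate i true →
    b = i ∧ X = Y := by
  induction b generalizing i with
  | zero =>
    intro X Y h
    cases i with
    | zero => simpa using h
    | succ i =>
      have := congrArg List.getLast? h
      simp [List.replicate_succ'] at this
      grind
  | succ b ih =>
    intro X Y h
    cases i with
    | zero =>
      have := congrArg List.getLast? h
      simp [List.replicate_succ'] at this
      grind
    | succ i =>
      rw [List.replicate_succ', List.replicate_succ', ← List.cons_append, ← List.cons_append,
        ← List.append_assoc, ← List.append_assoc] at h
      have h2 := List.append_cancel_right h
      have := ih i X Y h2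
      exact ⟨by omega, this.2⟩

lemma valid_prefix {c d : ℕ} {u t : List Bool} (h : isValid c d (u ++ false :: t)) :
    isValid c d u := by
  intro p s a b hu hp hs ha
  refine h p (s ++ false :: t) a b (by rw [hu]; simp) hp ?_ ha
  right
  rcases hs with rfl | hs
  · simp
  · cases s with
    | nil => simp at hs
    | cons x s => simpa using hs

lemma zeros_suffix (p u : List Bool) (a m : ℕ) (hp : p = [] ∨ p.getLast? = some true)
    (h : p ++ List.replicate a false = u ++ List.replicate m false) : m ≤ a := by
  by_contra hlt
  obtain ⟨k, rfl⟩ : ∃ k, m = (k + 1) + a := ⟨m - a - 1, by omega⟩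
  rw [List.replicate_add, ← List.append_assoc] at h
  have h2 := List.append_cancel_right h
  subst h2
  rcases hp with hp | hp
  · simp at hp
  · rw [List.replicate_succ', ← List.append_assoc] at hp
    simp at hp

lemma valid_append {c d : ℕ} (hc : 0 < c) {u : List Bool} (i : ℕ) (h : isValid c d u) :
    isValid c d (u ++ tok c d i) := by
  intro p s a b hu hp hs ha
  rcases Nat.eq_zero_or_pos b with rfl | hb
  · simpa using Nat.mul_pos hc ha
  obtain ⟨b, rfl⟩ : ∃ k, b = k + 1 := ⟨b - 1, by omega⟩
  obtain ⟨a, rfl⟩ : ∃ k, a = k + 1 := ⟨a - 1, by omega⟩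
  rcases List.append_eq_append_iff.1 hu with ⟨t, h1, h2⟩ | ⟨t, h1, h2⟩
  · -- the factor reaches into the token
    rcases hs with rfl | hs
    · rw [List.append_nil] at h2
      subst h2
      have h3 : (p ++ List.replicate a false) ++ false :: List.replicate (b + 1) true
          = (u ++ List.replicate (i * d / c) false) ++ false :: List.replicate i true := by
        have : (p ++ List.replicate (a + 1) false) ++ List.replicate (b + 1) true
          = (p ++ List.replicate a false) ++ false :: List.replicate (b + 1) true := by
          rw [List.replicate_succ' (n := a)]; simp
        rw [← this, h1]; simp [tok]
      obtain ⟨h4, h5⟩ := cancel_ones _ _ _ _ h3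
      have h6 := zeros_suffix _ _ _ _ hp h5
      subst h4
      have h7 : (b + 1) * d < c * ((b + 1) * d / c + 1) := Nat.lt_mul_div_succ _ hc
      have h8 : c * ((b + 1) * d / c + 1) ≤ c * (a + 1) := Nat.mul_le_mul_left _ (by omega)
      rw [mul_comm d]; omega
    · cases s with
      | nil => simp at hs
      | cons x s =>
        simp only [List.head?_cons, Option.some.injEq] at hs
        subst hs
        rcases List.eq_nil_or_concat t with rfl | ⟨t', x, rfl⟩
        · refine h p [] (a + 1) (b + 1) (by simpa using h1.symm) hp (Or.inl rfl) ha
        · exfalso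
          have hx : x = true := by
            have := congrArg List.getLast? h1
            simp [List.replicate_succ'] at this
            grind
          subst hx
          have hs : (tok c d i).Pairwise (fun x y => x = true → y = true) := by
            rw [tok_eq, List.pairwise_append]
            refine ⟨?_, ?_, ?_⟩ <;> simp [List.pairwise_replicate]
          rw [h2] at hs
          simp [List.pairwise_append] at hs
  · refine h p t (a + 1) (b + 1) h1 hp ?_ ha
    cases t with
    | nil => simp
    | cons x t =>
      right
      rcases hs with rfl | hs
      · simp at h2
      · rw [h2] at hs; simpa using hs

lemma ones_or (w : List Bool) :
    w = List.replicate w.length true ∨ ∃ u i, w = u ++ false :: List.replicate i true := by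
  induction w using List.reverseRecOn with
  | nil => simp
  | append_singleton w x ih =>
    cases x with
    | false => right; exact ⟨w, 0, by simp⟩
    | true =>
      rcases ih with h | ⟨u, i, h⟩
      · left
        rw [List.length_append, List.length_singleton, List.replicate_succ', ← h]
      · right
        exact ⟨u, i + 1, by rw [h, List.replicate_succ']; simp⟩

lemma strip_zeros (w : List Bool) :
    ∃ p a, w = p ++ List.replicate a false ∧ (p = [] ∨ p.getLast? = some true) := by
  induction w using List.reverseRecOn with
  | nil => exact ⟨[], 0, by simp⟩
  | append_singleton w x ih =>
    cases x with
    | true => exact ⟨w ++ [true], 0, by simp⟩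
    | false =>
      obtain ⟨p, a, h, hp⟩ := ih
      exact ⟨p, a + 1, by rw [h, List.replicate_succ']; simp, hp⟩

lemma valid_decomp {c d : ℕ} (hc : 0 < c) {w : List Bool} (h : isValid c d w) :
    w = List.replicate w.length true ∨ ∃ u i, w = u ++ tok c d i ∧ isValid c d u := by
  rcases ones_or w with h1 | ⟨v, i, h1⟩
  · exact Or.inl h1
  right
  obtain ⟨p, a, rfl, hp⟩ := strip_zeros v
  have h2 : d * i < c * (a + 1) :=
    h p [] (a + 1) i (by rw [h1, List.replicate_succ' (n := a)]; simp) hp (Or.inl rfl) (by omega)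
  have h3 : i * d / c < a + 1 := by
    rw [Nat.div_lt_iff_lt_mul hc, mul_comm i, mul_comm (a + 1)]; exact h2
  have h4 : w = (p ++ List.replicate (a - i * d / c) false) ++ tok c d i := by
    rw [h1, tok]
    have h5 : List.replicate a false
        = List.replicate (a - i * d / c) false ++ List.replicate (i * d / c) false := by
      rw [← List.replicate_add]; congr 1; omega
    rw [h5]; simp only [List.append_assoc]
  refine ⟨_, i, h4, ?_⟩
  obtain ⟨t, ht⟩ := tok_cons c d i
  rw [h4, ht] at h
  exact valid_prefix h

lemma valid_ones (c d n : ℕ) : isValid c d (List.replicate n true) := by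
  intro p s a b hu hp hs ha
  have : false ∈ List.replicate n true := by
    rw [hu]; simp; omega
  simp at this

instance wfin (c d n : ℕ) : Finite {w : List Bool // w.length = n ∧ isValid c d w} :=
  ((List.finite_length_eq Bool n).subset (fun _ h => h.1)).to_subtype

/-- Admissible token indices for length `n`. -/
def idx (c d n : ℕ) : Finset ℕ := (Finset.range n).filter (fun i => 1 + i * d / c + i ≤ n)

lemma mem_idx {c d n i : ℕ} : i ∈ idx c d n ↔ 1 + i * d / c + i ≤ n := by
  simp only [idx, Finset.mem_filter, Finset.mem_range]
  constructor
  · exact fun h => h.2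
  · intro h; exact ⟨by generalize i * d / c = k at h; omega, h⟩

/-- Words from a shorter word and a token. -/
def build (c d n : ℕ) (hc : 0 < c) :
    Option (Σ i : idx c d n,
      {u : List Bool // u.length = n - (1 + (i : ℕ) * d / c + i) ∧ isValid c d u}) →
    {w : List Bool // w.length = n ∧ isValid c d w}
  | none => ⟨List.replicate n true, by simp, valid_ones c d n⟩
  | some ⟨i, u⟩ => ⟨u.1 ++ tok c d i, by
      have := mem_idx.1 i.2
      rw [List.length_append, tok_length, u.2.1]; omega, valid_append hc i u.2.2⟩

lemma build_bij (c d n : ℕ) (hc : 0 < c) : Function.Bijective (build c d n hc) := by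
  have key : ∀ (u : List Bool) i, List.replicate n true ≠ u ++ tok c d i := by
    intro u i h
    have : false ∈ List.replicate n true := by rw [h]; simp [tok]
    simp at this
  constructor
  · rintro (_ | ⟨⟨i, hi⟩, ⟨u, hu⟩⟩) (_ | ⟨⟨j, hj⟩, ⟨v, hv⟩⟩) h
    · rfl
    · exact absurd (congrArg Subtype.val h) (key _ _)
    · exact absurd (congrArg Subtype.val h).symm (key _ _)
    · have h1 : u ++ tok c d i = v ++ tok c d j := congrArg Subtype.val h
      have h2 := h1
      simp only [tok, ← List.append_assoc] at h2
      obtain ⟨rfl, -⟩ := cancel_ones _ _ _ _ h2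
      have := List.append_cancel_right h1
      subst this
      rfl
  · rintro ⟨w, hw, hv⟩
    rcases valid_decomp hc hv with h | ⟨u, i, h, hu⟩
    · exact ⟨none, Subtype.ext (by rw [hw] at h; exact h.symm)⟩
    · have hl := congrArg List.length h
      rw [List.length_append, tok_length, hw] at hl
      exact ⟨some ⟨⟨i, mem_idx.2 (by omega)⟩, ⟨u, by simp only; omega, hu⟩⟩, Subtype.ext h.symm⟩

lemma wcount_rec (c d n : ℕ) (hc : 0 < c) :
    wcount c d n = (∑ i ∈ idx c d n, wcount c d (n - (1 + i * d / c + i))) + 1 := by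
  rw [wcount, ← Nat.card_congr (Equiv.ofBijective _ (build_bij c d n hc)), Finite.card_option,
    Nat.card_sigma]
  congr 1
  exact Finset.sum_coe_sort (idx c d n) (fun i => wcount c d (n - (1 + i * d / c + i)))

theorem stmt8 (c d : ℕ) (hc : 0 < c) (hd : 0 < d) (hcd : Nat.Coprime c d) (n : ℕ)
    (hn : c + d ≤ n) :
    wcount c d n =
      (∑ i ∈ Finset.range c, wcount c d (n - (1 + i * d / c + i))) + wcount c d (n - (c + d)) := by
  have hs : ∀ i, (i + c) * d / c = i * d / c + d := by
    intro i
    rw [add_mul, Nat.add_mul_div_left _ _ hc]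
  have hI : idx c d n = Finset.range c ∪ (idx c d (n - (c + d))).map (addRightEmbedding c) := by
    ext i
    simp only [Finset.mem_union, Finset.mem_map, mem_idx, Finset.mem_range, addRightEmbedding_apply]
    constructor
    · intro h
      by_cases hi : i < c
      · exact Or.inl hi
      · obtain ⟨k, rfl⟩ : ∃ k, i = k + c := ⟨i - c, by omega⟩
        rw [hs] at h
        exact Or.inr ⟨k, by omega, rfl⟩
    · rintro (h | ⟨k, h, rfl⟩)
      · have : i * d / c < d := by
          rw [Nat.div_lt_iff_lt_mul hc, mul_comm d]
          exact Nat.mul_lt_mul_of_pos_right h hd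
        omega
      · rw [hs]; omega
  have hD : Disjoint (Finset.range c) ((idx c d (n - (c + d))).map (addRightEmbedding c)) := by
    rw [Finset.disjoint_left]
    intro i hi
    simp only [Finset.mem_map, addRightEmbedding_apply, Finset.mem_range] at hi ⊢
    rintro ⟨k, -, rfl⟩
    omega
  rw [wcount_rec c d n hc, hI, Finset.sum_union hD, Finset.sum_map, add_assoc,
    wcount_rec c d (n - (c + d)) hc]
  congr 2
  refine Finset.sum_congr rfl fun i _ => ?_
  rw [addRightEmbedding_apply, hs]
  congr 1
  omega
end
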